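/- arXiv:2003.12499 — 4 statements merged into one kernel-verified Lean document; each statement's English description precedes it below -/
import Mathlib

section
/- Let f : [0,∞) → ℍ be twice continuously differentiable and let v₀ ∈ 𝒟(A) be such that Av₀ + f(0) ∈ 𝒟(A). Let v(t) := G(t)v₀ + ∫₀ᵗ G(t−s)f(s)ds be the (classical) solution of v̇(t) = Av(t) + f(t) with v(0) = v₀. Then v(h) ∈ 𝒟(A) for small h > 0 and (v(h) − v(0))/h converges, as h → 0+, to v'(0) = Av₀ + f(0) in the graph norm of 𝒟(A), i.e. (v(h)−v(0))/h → Av₀+f(0) in ℍ and A((v(h)−v(0))/h) → A(Av₀+f(0)) in ℍ. -/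
open MeasureTheory Filter Topology

noncomputable section

theorem aux_joint {H : Type*} [NormedAddCommGroup H] [InnerProductSpace ℂ H] [CompleteSpace H]
    (T : ℝ → H →L[ℂ] H) (hT : ∀ x, Continuous fun t => T t x) :
    Continuous fun p : ℝ × H => T p.1 p.2 := by
  rw [continuous_iff_continuousAt]
  rintro ⟨t, x⟩
  have hb : ∃ C, ∀ i : Set.Icc (t - 1) (t + 1), ‖T i‖ ≤ C := by
    apply banach_steinhaus
    intro y
    obtain ⟨C, hC⟩ := (isCompact_Icc (a := t - 1) (b := t + 1)).exists_bound_of_continuousOn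
      (hT y).continuousOn
    exact ⟨C, fun i => hC i i.2⟩
  obtain ⟨C, hC⟩ := hb
  have h1 : Tendsto (fun p : ℝ × H => C * ‖p.2 - x‖ + ‖T p.1 x - T t x‖) (𝓝 (t, x)) (𝓝 0) := by
    have hc : Continuous (fun p : ℝ × H => C * ‖p.2 - x‖ + ‖T p.1 x - T t x‖) := by
      have := (hT x).comp (continuous_fst (X := ℝ) (Y := H))
      have h3 : Continuous fun p : ℝ × H => T p.1 x := this
      fun_prop
    have := hc.tendsto (t, x)
    simpa using this
  rw [ContinuousAt, tendsto_iff_norm_sub_tendsto_zero]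
  refine squeeze_zero' (Eventually.of_forall fun _ => norm_nonneg _) ?_ h1
  have h2 : ∀ᶠ p : ℝ × H in 𝓝 (t, x), p.1 ∈ Set.Icc (t - 1) (t + 1) :=
    (continuous_fst (X := ℝ) (Y := H)).tendsto (t, x)
      (Icc_mem_nhds (by simp) (by simp))
  filter_upwards [h2] with p hp
  have : T p.1 p.2 - T t x = T p.1 (p.2 - x) + (T p.1 x - T t x) := by
    rw [map_sub]; abel
  rw [this]
  refine (norm_add_le _ _).trans ?_
  gcongr
  exact ((T p.1).le_opNorm _).trans (by gcongr; exact hC ⟨p.1, hp⟩)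

theorem aux_mean {H : Type*} [NormedAddCommGroup H] [NormedSpace ℝ H] [CompleteSpace H]
    (φ : ℝ → ℝ → H) (hφ : Continuous fun p : ℝ × ℝ => φ p.1 p.2) :
    Tendsto (fun h : ℝ => h⁻¹ • ∫ u in (0:ℝ)..h, φ h u) (𝓝[>] 0) (𝓝 (φ 0 0)) := by
  have hc : Continuous fun h : ℝ => ∫ r in (0:ℝ)..1, φ h (r * h) := by
    apply intervalIntegral.continuous_parametric_intervalIntegral_of_continuous'
    exact hφ.comp (f := fun p : ℝ × ℝ => (p.1, p.2 * p.1)) (by fun_prop)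
  have h0 := (hc.tendsto 0).mono_left (nhdsWithin_le_nhds (s := Set.Ioi 0))
  simp only [mul_zero, intervalIntegral.integral_const, sub_zero, one_smul] at h0
  refine h0.congr' ?_
  filter_upwards [self_mem_nhdsWithin] with h hh
  rw [intervalIntegral.integral_comp_mul_right _ (ne_of_gt hh)]
  simp

theorem aux_deriv {H : Type*} [NormedAddCommGroup H] [InnerProductSpace ℂ H] [CompleteSpace H]
    (T : ℝ → H →L[ℂ] H) (hT : ∀ x, Continuous fun t => T t x)
    (g g' : ℝ → H) (hg : ∀ x, HasDerivAt g (g' x) x) (hg' : Continuous g') (t : ℝ) :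
    HasDerivAt (fun h : ℝ => ∫ s in (0:ℝ)..t, T s (g (t + h - s)))
      (∫ s in (0:ℝ)..t, T s (g' (t - s))) 0 := by
  have hj := aux_joint T hT
  have hgc : Continuous g := continuous_iff_continuousAt.2 fun x => (hg x).continuousAt
  have hc' : Continuous fun p : ℝ × ℝ => T p.2 (g' (t + p.1 - p.2)) :=
    hj.comp (f := fun p : ℝ × ℝ => (p.2, g' (t + p.1 - p.2))) (by fun_prop)
  have hc : Continuous fun p : ℝ × ℝ => T p.2 (g (t + p.1 - p.2)) :=
    hj.comp (f := fun p : ℝ × ℝ => (p.2, g (t + p.1 - p.2))) (by fun_prop)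
  have hcs : ∀ h : ℝ, Continuous fun s : ℝ => T s (g (t + h - s)) := fun h =>
    hc.comp (f := fun s : ℝ => (h, s)) (by fun_prop)
  have hcs' : ∀ h : ℝ, Continuous fun s : ℝ => T s (g' (t + h - s)) := fun h =>
    hc'.comp (f := fun s : ℝ => (h, s)) (by fun_prop)
  obtain ⟨C, hC⟩ := ((isCompact_Icc (a := (-1:ℝ)) (b := 1)).prod
    (isCompact_uIcc (a := (0:ℝ)) (b := t))).exists_bound_of_continuousOn hc'.continuousOn
  have := (intervalIntegral.hasDerivAt_integral_of_dominated_loc_of_deriv_le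
    (μ := volume) (a := 0) (b := t) (x₀ := (0:ℝ)) (s := Set.Icc (-1:ℝ) 1) (bound := fun _ => C)
    (F := fun h s => T s (g (t + h - s))) (F' := fun h s => T s (g' (t + h - s)))
    (Icc_mem_nhds (by simp) (by simp))
    (Eventually.of_forall fun h => (hcs h).aestronglyMeasurable)
    ((hcs 0).intervalIntegrable _ _) (hcs' 0).aestronglyMeasurable
    (Eventually.of_forall fun s hs h hh => hC (h, s) ⟨hh, Set.uIoc_subset_uIcc hs⟩)
    (by simp) (Eventually.of_forall fun s hs h hh => ?_)).2
  · simpa using this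
  · have h1 : HasDerivAt (fun h : ℝ => g (t + h - s)) (g' (t + h - s)) h := by
      have h2 : HasDerivAt (fun h : ℝ => t + h - s) 1 h :=
        ((hasDerivAt_id h).const_add t).sub_const s
      simpa [Function.comp_def] using (hg (t + h - s)).scomp h h2
    exact ((T s).restrictScalars ℝ).hasFDerivAt.comp_hasDerivAt h h1

/-- Lemma 2.5 of the paper: let `G` be a `C₀`-semigroup on a complex
Hilbert space `H` with generator `(dom, A)`, let `f` be twice continuously differentiable
and let `v₀ ∈ 𝒟(A)` with `A v₀ + f 0 ∈ 𝒟(A)`. Then the classical solution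
`v(t) = G(t)v₀ + ∫₀ᵗ G(t - s) f(s) ds` of `v̇ = Av + f` satisfies `v(h) ∈ 𝒟(A)` for
`h ≥ 0` and `(v(h) - v(0))/h → v'(0) = A v₀ + f 0` as `h → 0+` in the graph norm of
`𝒟(A)`, i.e. `(v(h) - v(0))/h → A v₀ + f 0` and `A((v(h) - v(0))/h) → A(A v₀ + f 0)`
in `H`. -/
theorem statement8
    {H : Type*} [NormedAddCommGroup H] [InnerProductSpace ℂ H] [CompleteSpace H]
    (G : ℝ → H →L[ℂ] H)
    (hG0 : G 0 = ContinuousLinearMap.id ℂ H)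
    (hGadd : ∀ t s : ℝ, 0 ≤ t → 0 ≤ s → G (t + s) = (G t).comp (G s))
    (hGcont : ∀ v : H, ContinuousOn (fun t => G t v) (Set.Ici (0:ℝ)))
    (dom : Set H) (A : H → H)
    (hdom : ∀ v : H, v ∈ dom ↔ ∃ w : H,
      Tendsto (fun h : ℝ => (h : ℂ)⁻¹ • (G h v - v)) (𝓝[>] 0) (𝓝 w))
    (hA : ∀ v ∈ dom,
      Tendsto (fun h : ℝ => (h : ℂ)⁻¹ • (G h v - v)) (𝓝[>] 0) (𝓝 (A v)))
    (f : ℝ → H) (hf : ContDiff ℝ 2 f)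
    (v₀ : H) (hv₀ : v₀ ∈ dom) (hAv₀ : A v₀ + f 0 ∈ dom)
    (v : ℝ → H) (hv : ∀ t : ℝ, v t = G t v₀ + ∫ s in (0:ℝ)..t, G (t - s) (f s)) :
    (∀ h : ℝ, 0 ≤ h → v h ∈ dom) ∧
    Tendsto (fun h : ℝ => (h : ℂ)⁻¹ • (v h - v 0)) (𝓝[>] 0) (𝓝 (A v₀ + f 0)) ∧
    Tendsto (fun h : ℝ => A ((h : ℂ)⁻¹ • (v h - v 0))) (𝓝[>] 0)
      (𝓝 (A (A v₀ + f 0))) := by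
  have hsm : ∀ (h : ℝ) (x : H), ((h : ℂ)⁻¹) • x = h⁻¹ • x := by
    intro h x
    rw [← Complex.ofReal_inv, Complex.coe_smul]
  simp only [hsm] at *
  -- the extension of the semigroup to negative times by the identity
  obtain ⟨T, hTdef⟩ : ∃ T : ℝ → H →L[ℂ] H, T = fun t => G (max t 0) := ⟨_, rfl⟩
  have hTG : ∀ t, 0 ≤ t → T t = G t := fun t ht => by rw [hTdef]; simp [ht]
  have hT : ∀ x, Continuous fun t => T t x := by
    intro x
    rw [hTdef]
    exact (hGcont x).comp_continuous (f := fun t : ℝ => max t 0) (by fun_prop)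
      (fun t => Set.mem_Ici.2 (le_max_right _ _))
  have hT0 : ∀ x, T 0 x = x := by
    intro x; rw [hTG 0 le_rfl, hG0]; rfl
  have hTadd : ∀ t s : ℝ, 0 ≤ t → 0 ≤ s → ∀ x, T (t + s) x = T t (T s x) := by
    intro t s ht hs x
    rw [hTG _ (add_nonneg ht hs), hTG _ ht, hTG _ hs, hGadd t s ht hs]; rfl
  have hj := aux_joint T hT
  obtain ⟨g', hg'⟩ : ∃ g', g' = deriv f := ⟨_, rfl⟩
  have hf' : ∀ x, HasDerivAt f (g' x) x := fun x => by
    rw [hg']; exact (hf.differentiable (by norm_num) x).hasDerivAt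
  have hg'c : Continuous g' := by rw [hg']; exact hf.continuous_deriv (by norm_num)
  have hfc : Continuous f := hf.continuous
  obtain ⟨J, hJ⟩ : ∃ J : (ℝ → H) → ℝ → H, J = fun g t => ∫ s in (0:ℝ)..t, T s (g (t - s)) :=
    ⟨_, rfl⟩
  have hcts : ∀ (g : ℝ → H) (_ : Continuous g) (t : ℝ), Continuous fun s => T s (g (t - s)) :=
    fun g hg t => hj.comp (f := fun s : ℝ => (s, g (t - s))) (by fun_prop)
  have hvJ : ∀ t, 0 ≤ t → v t = T t v₀ + J f t := by
    intro t ht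
    rw [hv t, hTG t ht, hJ]
    congr 1
    have h1 : ∫ s in (0:ℝ)..t, T s (f (t - s)) = ∫ s in (0:ℝ)..t, T (t - s) (f s) := by
      have := intervalIntegral.integral_comp_sub_left (a := 0) (b := t)
        (fun s => T (t - s) (f s)) t
      simpa using this
    simp only
    rw [h1]
    apply intervalIntegral.integral_congr
    intro s hs
    rw [Set.uIcc_of_le ht] at hs
    simp only
    rw [hTG _ (sub_nonneg.2 hs.2)]
  have hmean : ∀ g : ℝ → H, Continuous g →
      Tendsto (fun h : ℝ => h⁻¹ • J g h) (𝓝[>] 0) (𝓝 (g 0)) := by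
    intro g hg
    have := aux_mean (fun h u => T u (g (h - u)))
      (hj.comp (f := fun p : ℝ × ℝ => (p.2, g (p.1 - p.2))) (by fun_prop))
    simp only [sub_zero, hT0] at this
    rw [hJ]
    exact this
  have hTmap : ∀ t : ℝ, ∀ (g : ℝ → H), Continuous g → ∀ a b : ℝ,
      ∫ s in a..b, T t (g s) = T t (∫ s in a..b, g s) := fun t g hg a b =>
    (T t).intervalIntegral_comp_comm (hg.intervalIntegrable a b)
  have hda : ∀ t h : ℝ, 0 ≤ t → 0 ≤ h →
      J f (t + h) = (∫ s in (0:ℝ)..t, T s (f (t + h - s))) + T t (J f h) := by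
    intro t h ht hh
    rw [hJ]
    simp only
    have hi := hcts f hfc (t + h)
    rw [← intervalIntegral.integral_add_adjacent_intervals (hi.intervalIntegrable 0 t)
      (hi.intervalIntegrable t (t + h)), ← hTmap t _ (hcts f hfc h)]
    congr 1
    have := intervalIntegral.integral_comp_add_left (a := 0) (b := h)
      (fun s => T s (f (t + h - s))) t
    rw [add_zero] at this
    rw [← this]
    apply intervalIntegral.integral_congr
    intro s hs
    rw [Set.uIcc_of_le hh] at hs
    simp only
    rw [hTadd t s ht hs.1, add_sub_add_left_eq_sub]
  have hdb : ∀ t h : ℝ, 0 ≤ t → 0 ≤ h →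
      J f (t + h) = J (fun s => f (t + s)) h + T h (J f t) := by
    intro t h ht hh
    rw [hJ]
    simp only
    have hi := hcts f hfc (t + h)
    rw [← intervalIntegral.integral_add_adjacent_intervals (hi.intervalIntegrable 0 h)
      (hi.intervalIntegrable h (t + h)), ← hTmap h _ (hcts f hfc t)]
    congr 1
    · simp only [add_sub_assoc]
    have := intervalIntegral.integral_comp_add_left (a := 0) (b := t)
      (fun s => T s (f (t + h - s))) h
    rw [add_zero, add_comm h t] at this
    rw [← this]
    apply intervalIntegral.integral_congr
    intro s hs
    rw [Set.uIcc_of_le ht] at hs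
    simp only
    rw [hTadd h s hh hs.1, add_comm t h, add_sub_add_left_eq_sub]
  have hgenJ : ∀ t, 0 ≤ t → Tendsto (fun h : ℝ => h⁻¹ • (T h (J f t) - J f t)) (𝓝[>] 0)
      (𝓝 (J g' t + T t (f 0) - f t)) := by
    intro t ht
    have h1 : Tendsto (fun h : ℝ => h⁻¹ • ((∫ s in (0:ℝ)..t, T s (f (t + h - s))) - J f t))
        (𝓝[>] 0) (𝓝 (J g' t)) := by
      have := (aux_deriv T hT f g' hf' hg'c t).tendsto_slope_zero_right
      rw [hJ]
      simpa using this
    have h2 := ((T t).continuous.tendsto _).comp (hmean f hfc)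
    have h3 := hmean (fun s => f (t + s)) (by fun_prop)
    simp only [add_zero] at h3
    refine ((h1.add h2).sub h3).congr' ?_
    filter_upwards [self_mem_nhdsWithin] with h hh
    have hh' : (0:ℝ) ≤ h := le_of_lt hh
    have e := (hda t h ht hh').symm.trans (hdb t h ht hh')
    have e2 : T h (J f t) - J f t = ((∫ s in (0:ℝ)..t, T s (f (t + h - s))) - J f t)
        + T t (J f h) - J (fun s => f (t + s)) h := by
      rw [eq_sub_of_add_eq' e.symm]; abel
    rw [e2]
    have e3 : T t (h⁻¹ • J f h) = h⁻¹ • T t (J f h) :=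
      ((T t).restrictScalars ℝ).map_smul _ _
    simp only [Function.comp, e3, smul_sub, smul_add]
  have hgenT : ∀ t, 0 ≤ t → Tendsto (fun h : ℝ => h⁻¹ • (T h (T t v₀) - T t v₀)) (𝓝[>] 0)
      (𝓝 (T t (A v₀))) := by
    intro t ht
    refine (((T t).continuous.tendsto _).comp (hA v₀ hv₀)).congr' ?_
    filter_upwards [self_mem_nhdsWithin] with h hh
    have hh' : (0:ℝ) ≤ h := le_of_lt hh
    have e3 : ∀ x, T t (h⁻¹ • x) = h⁻¹ • T t x := fun x =>
      ((T t).restrictScalars ℝ).map_smul _ _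
    simp only [Function.comp]
    rw [e3, map_sub, ← hTG h hh', ← hTadd t h ht hh', add_comm, hTadd h t hh' ht]
  have hgen : ∀ t, 0 ≤ t → Tendsto (fun h : ℝ => h⁻¹ • (G h (v t) - v t)) (𝓝[>] 0)
      (𝓝 (T t (A v₀) + (J g' t + T t (f 0) - f t))) := by
    intro t ht
    refine ((hgenT t ht).add (hgenJ t ht)).congr' ?_
    filter_upwards [self_mem_nhdsWithin] with h hh
    have hh' : (0:ℝ) ≤ h := le_of_lt hh
    rw [← hTG h hh', hvJ t ht, map_add, ← smul_add]
    congr 1; abel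
  have hv0 : v 0 = v₀ := by rw [hvJ 0 le_rfl, hT0, hJ]; simp
  have hdomv : ∀ h : ℝ, 0 ≤ h → v h ∈ dom := fun h hh => (hdom _).2 ⟨_, hgen h hh⟩
  refine ⟨hdomv, ?_, ?_⟩
  · refine ((hA v₀ hv₀).add (hmean f hfc)).congr' ?_
    filter_upwards [self_mem_nhdsWithin] with h hh
    have hh' : (0:ℝ) ≤ h := le_of_lt hh
    rw [hv0, hvJ h hh', hTG h hh', ← smul_add]
    congr 1; abel
  · have h1 := hA _ hAv₀
    have h2 := hmean g' hg'c
    have h3 : Tendsto (fun h : ℝ => h⁻¹ • (f h - f 0)) (𝓝[>] 0) (𝓝 (g' 0)) := by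
      have := (hf' 0).tendsto_slope_zero_right
      simpa using this
    have h4 := (h1.add h2).sub h3
    rw [add_sub_cancel_right] at h4
    refine h4.congr' ?_
    filter_upwards [self_mem_nhdsWithin] with k hk
    have hk' : (0:ℝ) ≤ k := le_of_lt hk
    have hlim : Tendsto (fun h : ℝ => h⁻¹ • (G h (k⁻¹ • (v k - v 0)) - k⁻¹ • (v k - v 0)))
        (𝓝[>] 0) (𝓝 (k⁻¹ • ((T k (A v₀) + (J g' k + T k (f 0) - f k)) - A v₀))) := by
      have := hA v₀ hv₀
      refine (((hgen k hk').sub this).const_smul k⁻¹).congr' (Eventually.of_forall fun h => ?_)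
      have e3 : ∀ x, G h (k⁻¹ • x) = k⁻¹ • G h x := fun x =>
        ((G h).restrictScalars ℝ).map_smul _ _
      simp only
      rw [e3, hv0, ← smul_sub, ← smul_sub, smul_comm, map_sub]
      congr 2; abel
    have hmem := (hdom _).2 ⟨_, hlim⟩
    rw [tendsto_nhds_unique (hA _ hmem) hlim, hTG k hk', map_add, ← smul_add, ← smul_sub]
    congr 1; abel
end
end

section
/- Let C : C([−τ,0];ℝⁿ) → ℝʳ be any bounded linear operator. Then there exists a constant M_C > 0 such that for all T > 0, all p ≥ 1, and every continuous function x : [−τ,T] → ℝⁿ one has (∫₀ᵀ |C(x_t)|^p dt)^{1/p} ≤ M_C · ( ∫_{−τ}^0 |x(t)|^p dt + ∫₀ᵀ |x(t)|^p dt )^{1/p}, where x_t ∈ C([−τ,0];ℝⁿ) denotes the history segment x_t(θ) := x(t+θ) for θ ∈ [−τ,0]. -/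
open MeasureTheory

noncomputable section

namespace DelaySeg

variable {n : ℕ}

/-- The history segment `x_t ∈ C([-τ, 0]; ℝⁿ)`, `x_t(θ) = x(t + θ)`, of a continuous
function `x : ℝ → ℝⁿ`. -/
def seg (τ : ℝ) (x : ℝ → (Fin n → ℝ)) (hx : Continuous x) (t : ℝ) :
    C(Set.Icc (-τ) (0:ℝ), Fin n → ℝ) :=
  ⟨fun θ => x (t + θ), hx.comp (continuous_const.add continuous_subtype_val)⟩

lemma continuous_seg (τ : ℝ) (x : ℝ → (Fin n → ℝ)) (hx : Continuous x) :
    Continuous (seg τ x hx) := by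
  apply ContinuousMap.continuous_of_continuous_uncurry
  show Continuous (fun q : ℝ × Set.Icc (-τ) (0:ℝ) => x (q.1 + q.2))
  fun_prop

lemma shift_le (τ : ℝ) (f : ℝ → ℝ) (hf : Continuous f) (h0 : ∀ t, 0 ≤ f t)
    (T : ℝ) (hT : 0 < T) (θ : ℝ) (h1 : -τ ≤ θ) (h2 : θ ≤ 0) :
    ∫ t in Set.Ioc (0:ℝ) T, f (t + θ) ≤
      (∫ t in Set.Ioc (-τ) (0:ℝ), f t) + ∫ t in Set.Ioc (0:ℝ) T, f t := by
  rw [← intervalIntegral.integral_of_le hT.le, ← intervalIntegral.integral_of_le hT.le,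
    ← intervalIntegral.integral_of_le (by linarith),
    intervalIntegral.integral_add_adjacent_intervals (hf.intervalIntegrable _ _)
      (hf.intervalIntegrable _ _), intervalIntegral.integral_comp_add_right]
  exact intervalIntegral.integral_mono_interval (by linarith) (by linarith) (by linarith)
    (Filter.Eventually.of_forall h0) (hf.intervalIntegrable _ _)

/-- Young's inequality, in the form used below. -/
lemma young (p : ℝ) (hp : 1 ≤ p) (a b : ℝ) (ha : 0 ≤ a) (hb : 0 ≤ b) :
    a ^ (p - 1) * b ≤ (1 - 1/p) * a ^ p + (1/p) * b ^ p := by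
  have hp0 : 0 < p := by linarith
  have h1 : 1/p ≤ 1 := by rw [div_le_one hp0]; exact hp
  have := Real.geom_mean_le_arith_mean2_weighted (w₁ := 1 - 1/p) (w₂ := 1/p)
    (p₁ := a ^ p) (p₂ := b ^ p) (by linarith) (by positivity) (by positivity) (by positivity)
    (by ring)
  rw [← Real.rpow_mul ha, ← Real.rpow_mul hb] at this
  have e1 : p * (1 - 1/p) = p - 1 := by field_simp
  have e2 : p * (1/p) = 1 := by field_simp
  rwa [e1, e2, Real.rpow_one] at this

lemma scalar_bound (τ : ℝ) (φ : C(Set.Icc (-τ) (0:ℝ), Fin n → ℝ) →L[ℝ] ℝ)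
    (K : ℝ) (hK : 0 < K) (hφ : ∀ f, |φ f| ≤ K * ‖f‖) (T : ℝ) (hT : 0 < T) (p : ℝ) (hp : 1 ≤ p)
    (x : ℝ → (Fin n → ℝ)) (hx : Continuous x) :
    ∫ t in Set.Ioc (0:ℝ) T, |φ (seg τ x hx t)| ^ p ≤
      K ^ p * ((∫ t in Set.Ioc (-τ) (0:ℝ), ‖x t‖ ^ p) + ∫ t in Set.Ioc (0:ℝ) T, ‖x t‖ ^ p) := by
  have hp0 : 0 < p := by linarith
  have hseg := continuous_seg τ x hx
  set u : ℝ → ℝ := fun t => φ (seg τ x hx t) with hu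
  have huc : Continuous u := φ.continuous.comp hseg
  set B := (∫ t in Set.Ioc (-τ) (0:ℝ), ‖x t‖ ^ p) + ∫ t in Set.Ioc (0:ℝ) T, ‖x t‖ ^ p with hB
  set A := ∫ t in Set.Ioc (0:ℝ) T, |u t| ^ p with hA
  have hA0 : 0 ≤ A := integral_nonneg fun t => by positivity
  have hB0 : 0 ≤ B := add_nonneg (integral_nonneg fun t => by positivity)
    (integral_nonneg fun t => by positivity)
  set h : ℝ → ℝ := fun t => SignType.sign (u t) * |u t| ^ (p - 1) with hh
  have hpow : Continuous fun t => |u t| ^ (p - 1) :=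
    huc.abs.rpow_const fun _ => Or.inr (by linarith)
  have hsm : Measurable fun y : ℝ => ((SignType.sign y : SignType) : ℝ) := by
    have : (fun y : ℝ => ((SignType.sign y : SignType) : ℝ)) =
        fun y => if 0 < y then 1 else if y < 0 then -1 else 0 := by
      ext y
      rw [sign_apply]
      split_ifs <;> simp
    rw [this]
    exact Measurable.ite measurableSet_Ioi measurable_const
      (Measurable.ite measurableSet_Iio measurable_const measurable_const)
  have hm : Measurable h := (hsm.comp huc.measurable).mul hpow.measurable
  have hhabs : ∀ t, |h t| ≤ |u t| ^ (p - 1) := by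
    intro t
    rw [hh]
    simp only [abs_mul]
    rw [abs_of_nonneg (by positivity : (0:ℝ) ≤ |u t| ^ (p - 1))]
    refine mul_le_of_le_one_left (by positivity) ?_
    rcases lt_trichotomy (u t) 0 with h | h | h <;> simp [h]
  have hhu : ∀ t, h t * u t = |u t| ^ p := by
    intro t
    rw [hh]
    simp only
    rw [mul_right_comm, sign_mul_self]
    by_cases h0 : u t = 0
    · simp [h0, Real.zero_rpow hp0.ne']
    · have : |u t| ^ p = |u t| ^ (1 + (p - 1)) := by ring_nf
      rw [this, Real.rpow_add (abs_pos.mpr h0), Real.rpow_one]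
  have intOn : ∀ {f : ℝ → ℝ}, Continuous f → IntegrableOn f (Set.Ioc 0 T) := fun hf =>
    (hf.integrableOn_Icc).mono_set Set.Ioc_subset_Icc_self
  have hF : Integrable (fun t => h t • seg τ x hx t) (volume.restrict (Set.Ioc 0 T)) := by
    refine Integrable.mono' (intOn (hpow.mul hseg.norm))
      (hm.aestronglyMeasurable.smul hseg.aestronglyMeasurable) ?_
    refine Filter.Eventually.of_forall fun t => ?_
    rw [norm_smul]
    exact mul_le_mul_of_nonneg_right (hhabs t) (norm_nonneg _)
  set F := ∫ t in Set.Ioc (0:ℝ) T, h t • seg τ x hx t with hFd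
  have hAF : A = φ F := by
    rw [hFd, ← ContinuousLinearMap.integral_comp_comm φ hF, hA]
    refine integral_congr_ae (Filter.Eventually.of_forall fun t => ?_)
    simp only [map_smul, smul_eq_mul]
    exact (hhu t).symm
  set D := (1 - 1/p) * A + (1/p) * (K ^ p * B) with hD
  have h1p : 1/p ≤ 1 := by rw [div_le_one hp0]; exact hp
  have hD0 : 0 ≤ D := by
    have : 0 ≤ 1 - 1/p := by linarith
    positivity
  have hFn : ‖F‖ ≤ D / K := by
    rw [ContinuousMap.norm_le _ (by positivity)]
    intro θ
    rw [le_div_iff₀ hK]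
    have hxp : Continuous fun t => ‖x t‖ ^ p := hx.norm.rpow_const fun _ => Or.inr hp0.le
    have hxs : Continuous fun t => ‖x (t + θ)‖ ^ p :=
      hxp.comp (continuous_id.add continuous_const)
    have hxs1 : Continuous fun t => ‖x (t + θ)‖ := by fun_prop
    have hup : Continuous fun t => |u t| ^ p := huc.abs.rpow_const fun _ => Or.inr hp0.le
    have hFθ : F θ = ∫ t in Set.Ioc (0:ℝ) T, h t • x (t + θ) := by
      have := ContinuousLinearMap.integral_comp_comm
        (ContinuousMap.evalCLM ℝ θ : C(Set.Icc (-τ) (0:ℝ), Fin n → ℝ) →L[ℝ] (Fin n → ℝ)) hF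
      exact this.symm
    have e1 : ‖F θ‖ ≤ ∫ t in Set.Ioc (0:ℝ) T, |u t| ^ (p - 1) * ‖x (t + θ)‖ := by
      rw [hFθ]
      refine norm_integral_le_of_norm_le (intOn (hpow.mul hxs1))
        (Filter.Eventually.of_forall fun t => ?_)
      rw [norm_smul]
      exact mul_le_mul_of_nonneg_right (hhabs t) (norm_nonneg _)
    calc ‖F θ‖ * K ≤ (∫ t in Set.Ioc (0:ℝ) T, |u t| ^ (p - 1) * ‖x (t + θ)‖) * K := by gcongr
      _ = ∫ t in Set.Ioc (0:ℝ) T, |u t| ^ (p - 1) * ‖x (t + θ)‖ * K :=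
          (integral_mul_const _ _).symm
      _ ≤ ∫ t in Set.Ioc (0:ℝ) T,
            ((1 - 1/p) * |u t| ^ p + (1/p) * K ^ p * ‖x (t + θ)‖ ^ p) := by
          refine integral_mono (intOn ((hpow.mul hxs1).mul continuous_const))
            (intOn ((continuous_const.mul hup).add (continuous_const.mul hxs))) fun t => ?_
          have := young p hp (|u t|) (K * ‖x (t + θ)‖) (abs_nonneg _) (by positivity)
          rw [Real.mul_rpow hK.le (norm_nonneg _)] at this
          show |u t| ^ (p - 1) * ‖x (t + θ)‖ * K ≤ _
          calc _ = |u t| ^ (p - 1) * (K * ‖x (t + θ)‖) := by ring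
            _ ≤ _ := this
            _ = _ := by ring
      _ = (1 - 1/p) * A + (1/p) * K ^ p * ∫ t in Set.Ioc (0:ℝ) T, ‖x (t + θ)‖ ^ p := by
          rw [integral_add (f := fun t => (1 - 1/p) * |u t| ^ p)
            (g := fun t => (1/p) * K ^ p * ‖x (t + θ)‖ ^ p)
            (intOn (continuous_const.mul hup)) (intOn (continuous_const.mul hxs)),
            integral_const_mul, integral_const_mul]
      _ ≤ (1 - 1/p) * A + (1/p) * K ^ p * B := by
          gcongr
          exact shift_le τ (fun t => ‖x t‖ ^ p) hxp (fun t => by positivity) T hT θ θ.2.1 θ.2.2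
      _ = D := by rw [hD]; ring
  have hAD : A ≤ D := by
    calc A = φ F := hAF
      _ ≤ |φ F| := le_abs_self _
      _ ≤ K * ‖F‖ := hφ F
      _ ≤ K * (D / K) := by gcongr
      _ = D := by field_simp
  have h3 : (1/p) * A ≤ (1/p) * (K ^ p * B) := by rw [hD] at hAD; linarith
  exact le_of_mul_le_mul_left h3 (by positivity)

/-- Lemma 5.3 of the paper: for every bounded linear operator
`C : C([-τ, 0]; ℝⁿ) → ℝʳ` there is a constant `M_C > 0` such that for all `T > 0`,
all `p ≥ 1` and every continuous `x : ℝ → ℝⁿ`,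
`(∫₀ᵀ |C x_t|^p dt)^{1/p} ≤ M_C (∫_{-τ}^0 |x|^p dt + ∫₀ᵀ |x|^p dt)^{1/p}`. -/
theorem statement14 (τ : ℝ) (hτ : 0 < τ) (n r : ℕ)
    (C : C(Set.Icc (-τ) (0:ℝ), Fin n → ℝ) →L[ℝ] (Fin r → ℝ)) :
    ∃ M > (0:ℝ), ∀ T > (0:ℝ), ∀ p : ℝ, 1 ≤ p →
      ∀ (x : ℝ → (Fin n → ℝ)) (hx : Continuous x),
        (∫ t in Set.Ioc (0:ℝ) T, ‖C (seg τ x hx t)‖ ^ p) ^ (1/p) ≤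
          M * (((∫ t in Set.Ioc (-τ) (0:ℝ), ‖x t‖ ^ p) +
            ∫ t in Set.Ioc (0:ℝ) T, ‖x t‖ ^ p) ^ (1/p)) := by
  refine ⟨((r:ℝ) + 1) * (‖C‖ + 1), by positivity, ?_⟩
  intro T hT p hp x hx
  have hp0 : 0 < p := by linarith
  set K := ‖C‖ + 1 with hKd
  have hK : 0 < K := by positivity
  set B := (∫ t in Set.Ioc (-τ) (0:ℝ), ‖x t‖ ^ p) + ∫ t in Set.Ioc (0:ℝ) T, ‖x t‖ ^ p with hB
  have hB0 : 0 ≤ B := add_nonneg (integral_nonneg fun t => by positivity)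
    (integral_nonneg fun t => by positivity)
  have hseg := continuous_seg τ x hx
  have intOn : ∀ {f : ℝ → ℝ}, Continuous f → IntegrableOn f (Set.Ioc 0 T) := fun hf =>
    (hf.integrableOn_Icc).mono_set Set.Ioc_subset_Icc_self
  have hC : Continuous fun t => C (seg τ x hx t) := C.continuous.comp hseg
  have hCj : ∀ j : Fin r, Continuous fun t => |C (seg τ x hx t) j| ^ p := fun j =>
    ((continuous_apply j).comp hC).abs.rpow_const fun _ => Or.inr hp0.le
  have key : ∀ j : Fin r, ∫ t in Set.Ioc (0:ℝ) T, |C (seg τ x hx t) j| ^ p ≤ K ^ p * B := by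
    intro j
    refine scalar_bound τ ((ContinuousLinearMap.proj j).comp C) K hK ?_ T hT p hp x hx
    intro f
    calc |C f j| ≤ ‖C f‖ := norm_le_pi_norm (C f) j
      _ ≤ ‖C‖ * ‖f‖ := C.le_opNorm f
      _ ≤ K * ‖f‖ := by gcongr; linarith
  have pt : ∀ y : Fin r → ℝ, ‖y‖ ^ p ≤ ∑ j, |y j| ^ p := by
    intro y
    have hs : 0 ≤ ∑ j, |y j| ^ p := Finset.sum_nonneg fun j _ => by positivity
    have : ‖y‖ ≤ (∑ j, |y j| ^ p) ^ (1/p) := by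
      rw [pi_norm_le_iff_of_nonneg (by positivity)]
      intro j
      rw [Real.norm_eq_abs, one_div, Real.le_rpow_inv_iff_of_pos (abs_nonneg _) hs hp0]
      exact Finset.single_le_sum (f := fun j => |y j| ^ p) (fun j _ => by positivity)
        (Finset.mem_univ j)
    rwa [one_div, Real.le_rpow_inv_iff_of_pos (norm_nonneg _) hs hp0] at this
  have hmain : ∫ t in Set.Ioc (0:ℝ) T, ‖C (seg τ x hx t)‖ ^ p ≤ ((r:ℝ) + 1) ^ p * (K ^ p * B) := by
    calc _ ≤ ∫ t in Set.Ioc (0:ℝ) T, ∑ j, |C (seg τ x hx t) j| ^ p :=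
          integral_mono (intOn (hC.norm.rpow_const fun _ => Or.inr hp0.le))
            (intOn (continuous_finsetSum _ fun j _ => hCj j)) fun t => pt _
      _ = ∑ j, ∫ t in Set.Ioc (0:ℝ) T, |C (seg τ x hx t) j| ^ p :=
          integral_finsetSum _ fun j _ => intOn (hCj j)
      _ ≤ ∑ _j : Fin r, K ^ p * B := Finset.sum_le_sum fun j _ => key j
      _ = (r:ℝ) * (K ^ p * B) := by simp
      _ ≤ _ := by
          gcongr
          calc (r:ℝ) ≤ ((r:ℝ) + 1) ^ (1:ℝ) := by rw [Real.rpow_one]; linarith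
            _ ≤ _ := Real.rpow_le_rpow_of_exponent_le (by
                have : (0:ℝ) ≤ r := by positivity
                linarith) hp
  have hI0 : 0 ≤ ∫ t in Set.Ioc (0:ℝ) T, ‖C (seg τ x hx t)‖ ^ p :=
    integral_nonneg fun t => by positivity
  calc _ ≤ (((r:ℝ) + 1) ^ p * (K ^ p * B)) ^ (1/p) :=
        Real.rpow_le_rpow hI0 hmain (by positivity)
    _ = _ := by
        rw [Real.mul_rpow (by positivity) (by positivity),
          Real.mul_rpow (by positivity) (by positivity), one_div,
          Real.rpow_rpow_inv (by positivity) hp0.ne', Real.rpow_rpow_inv (by positivity) hp0.ne',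
          mul_assoc]


end DelaySeg
end
end

section
/- Consider ẋ(t) = F(t, C̃x_t) in ℝⁿ, where F satisfies (L2) with Lipschitz constant Λ computed with respect to the Euclidean norms, and C̃φ = (∫_{−τ}^0 φ_{j₁}(θ)dμ₁(θ), …, ∫_{−τ}^0 φ_{j_r}(θ)dμ_r(θ)) with Borel signed measures μ_k on [−τ,0] of total variation ≤ 1 and integers 1 ≤ j₁ ≤ … ≤ j_r ≤ n. Suppose e·√r·√(1 + e^{−2}r^{−1})·τ < Λ^{−1}. Then for the Lur'e form ẋ(t) = Âx_t + B̂F̂(t, Ĉx_t), with ν := τ^{−1}, the transfer matrix Ŵ(p) = γ̂(p)(a − p)⁻¹ satisfies the spectral-norm bound |Ŵ(−ν + iω)|₂ ≤ √(r e² + 1)·τ for all ω ∈ ℝ and all a ≥ 0; consequently, for all sufficiently small a > 0, the Smith frequency condition |Ŵ(−τ^{−1}+iω)|₂ < (Λ+a)^{−1} holds for all ω ∈ ℝ, the characteristic equation of the linear part (a−p)ⁿ = 0 has exactly n roots (p = a, with multiplicity n) with Re p > −τ^{−1} and none on the line Re p = −τ^{−1}, so the quadratic Lyapunov functional theorem applies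 with j = n and ν = τ^{−1} and the quadratic form 𝓕(v,ξ) := (Λ+a)²|Ĉv|² − |ξ|². -/
open MeasureTheory Filter Topology Matrix

noncomputable section

namespace DelaySmallDelays

/-- Real part of the scalar exponential segment `θ ↦ e^{pθ}` on `[-τ, 0]`. -/
def expReSc (τ : ℝ) (p : ℂ) : C(Set.Icc (-τ) (0:ℝ), ℝ) :=
  ⟨fun θ => (Complex.exp (p * (θ : ℝ))).re,
    Complex.continuous_re.comp (Complex.continuous_exp.comp
      (continuous_const.mul (Complex.continuous_ofReal.comp continuous_subtype_val)))⟩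

/-- Imaginary part of the scalar exponential segment `θ ↦ e^{pθ}` on `[-τ, 0]`. -/
def expImSc (τ : ℝ) (p : ℂ) : C(Set.Icc (-τ) (0:ℝ), ℝ) :=
  ⟨fun θ => (Complex.exp (p * (θ : ℝ))).im,
    Complex.continuous_im.comp (Complex.continuous_exp.comp
      (continuous_const.mul (Complex.continuous_ofReal.comp continuous_subtype_val)))⟩

/-- The complex moment `∫_{-τ}^0 e^{pθ} dμ(θ)` of a (signed) measure `μ` on `[-τ, 0]`,
realized (via Riesz representation) as a bounded linear functional on `C([-τ, 0]; ℝ)`. -/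
def moment (τ : ℝ) (μ : C(Set.Icc (-τ) (0:ℝ), ℝ) →L[ℝ] ℝ) (p : ℂ) : ℂ :=
  (μ (expReSc τ p) : ℂ) + Complex.I * (μ (expImSc τ p) : ℂ)

/-- The matrix `γ̂(p)`: its `k`-th row (`k ≤ r`) has the single nonzero entry
`∫_{-τ}^0 e^{pθ} dμ_k(θ)` in column `j_k`, and its last `n` rows form the identity. -/
def gammaHat (τ : ℝ) {n r : ℕ} (μs : Fin r → (C(Set.Icc (-τ) (0:ℝ), ℝ) →L[ℝ] ℝ))
    (jdx : Fin r → Fin n) (p : ℂ) : Matrix (Fin r ⊕ Fin n) (Fin n) ℂ :=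
  Matrix.of fun k j =>
    Sum.elim (fun k' => if j = jdx k' then moment τ (μs k') p else 0)
      (fun i => if j = i then 1 else 0) k

/-- The spectral (operator) norm of a complex matrix with respect to Euclidean norms. -/
def specNorm {α β : Type*} [Fintype α] [Fintype β] [DecidableEq β]
    (Mx : Matrix α β ℂ) : ℝ :=
  ‖LinearMap.toContinuousLinearMap (Matrix.toEuclideanLin Mx)‖

/-- The transfer matrix `Ŵ(p) = γ̂(p) (a - p)⁻¹` of the Lur'e form, at `p = -τ⁻¹ + iω`. -/
def What (τ : ℝ) {n r : ℕ} (μs : Fin r → (C(Set.Icc (-τ) (0:ℝ), ℝ) →L[ℝ] ℝ))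
    (jdx : Fin r → Fin n) (a ω : ℝ) : Matrix (Fin r ⊕ Fin n) (Fin n) ℂ :=
  ((a : ℂ) - (((-τ⁻¹ : ℝ) : ℂ) + ω * Complex.I))⁻¹ •
    gammaHat τ μs jdx (((-τ⁻¹ : ℝ) : ℂ) + ω * Complex.I)

lemma moment_bound (τ : ℝ) (hτ : 0 < τ) (μ : C(Set.Icc (-τ) (0:ℝ), ℝ) →L[ℝ] ℝ) (hμ : ‖μ‖ ≤ 1)
    (ω : ℝ) : ‖moment τ μ (((-τ⁻¹ : ℝ) : ℂ) + ω * Complex.I)‖ ≤ Real.exp 1 := by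
  set p : ℂ := ((-τ⁻¹ : ℝ) : ℂ) + ω * Complex.I with hp
  set m := moment τ μ p with hm
  have hre : m.re = μ (expReSc τ p) := by simp [hm, moment]
  have him : m.im = μ (expImSc τ p) := by simp [hm, moment]
  have h1 : ‖m‖ ^ 2 = μ (m.re • expReSc τ p + m.im • expImSc τ p) := by
    rw [map_add, map_smul, map_smul, ← hre, ← him, ← Complex.normSq_eq_norm_sq,
      Complex.normSq_apply]
    simp
  have h2 : ‖m.re • expReSc τ p + m.im • expImSc τ p‖ ≤ ‖m‖ * Real.exp 1 := by
    rw [ContinuousMap.norm_le _ (by positivity)]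
    intro θ
    have e1 : (m.re • expReSc τ p + m.im • expImSc τ p) θ
        = (star m * Complex.exp (p * (θ : ℝ))).re := by
      simp only [expReSc, expImSc, ContinuousMap.add_apply, ContinuousMap.smul_apply,
        ContinuousMap.coe_mk, smul_eq_mul, Complex.mul_re, Complex.star_def, Complex.conj_re,
        Complex.conj_im]
      ring
    rw [e1, Real.norm_eq_abs]
    refine (Complex.abs_re_le_norm _).trans ?_
    rw [norm_mul, norm_star, Complex.norm_exp]
    gcongr
    have e2 : (p * ((θ : ℝ) : ℂ)).re = τ⁻¹ * (-(θ : ℝ)) := by simp [hp]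
    rw [e2]
    have h3 : -(θ : ℝ) ≤ τ := by linarith [θ.2.1]
    calc τ⁻¹ * (-(θ : ℝ)) ≤ τ⁻¹ * τ := by gcongr
      _ = 1 := inv_mul_cancel₀ hτ.ne'
  have h3 : ‖m‖ ^ 2 ≤ ‖m‖ * Real.exp 1 := by
    rw [h1]
    refine (le_abs_self _).trans ?_
    rw [← Real.norm_eq_abs]
    refine (μ.le_opNorm _).trans ?_
    calc _ ≤ 1 * (‖m‖ * Real.exp 1) := by gcongr
      _ = _ := one_mul _
  rcases (norm_nonneg m).eq_or_lt with h | h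
  · rw [← h]; positivity
  · rw [sq] at h3
    exact le_of_mul_le_mul_left h3 h

lemma spec_bound (τ : ℝ) (hτ : 0 < τ) {n r : ℕ}
    (μs : Fin r → (C(Set.Icc (-τ) (0:ℝ), ℝ) →L[ℝ] ℝ)) (hμs : ∀ k, ‖μs k‖ ≤ 1)
    (jdx : Fin r → Fin n) (a : ℝ) (ha : 0 ≤ a) (ω : ℝ) :
    specNorm (What τ μs jdx a ω) ≤ Real.sqrt ((r : ℝ) * (Real.exp 1) ^ 2 + 1) * τ := by
  unfold specNorm
  refine ContinuousLinearMap.opNorm_le_bound _ (by positivity) fun x => ?_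
  set p : ℂ := ((-τ⁻¹ : ℝ) : ℂ) + ω * Complex.I with hp
  have hc : ‖((a : ℂ) - p)⁻¹‖ ≤ τ := by
    rw [norm_inv]
    refine inv_le_of_inv_le₀ hτ ?_
    refine le_trans ?_ (Complex.re_le_norm _)
    simp [hp, ha]
  have e : LinearMap.toContinuousLinearMap (Matrix.toEuclideanLin (What τ μs jdx a ω)) x
      = ((a : ℂ) - p)⁻¹ • (Matrix.toEuclideanLin (gammaHat τ μs jdx p) x) := by
    simp [What, hp]
  rw [e, norm_smul]
  have hg : ‖Matrix.toEuclideanLin (gammaHat τ μs jdx p) x‖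
      ≤ Real.sqrt ((r : ℝ) * (Real.exp 1) ^ 2 + 1) * ‖x‖ := by
    have hb : ∀ i, ‖x i‖ ^ 2 ≤ ‖x‖ ^ 2 := fun i => by
      have := PiLp.norm_apply_le x i
      gcongr
    rw [EuclideanSpace.norm_eq]
    refine Real.sqrt_le_iff.2 ⟨by positivity, ?_⟩
    rw [mul_pow, Real.sq_sqrt (by positivity), Fintype.sum_sum_type]
    have hl : ∀ k : Fin r, (Matrix.toEuclideanLin (gammaHat τ μs jdx p) x) (Sum.inl k)
        = moment τ (μs k) p * x (jdx k) := fun k => by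
      simp [Matrix.toLpLin_apply, gammaHat, Matrix.mulVec, dotProduct]
    have hr' : ∀ k : Fin n, (Matrix.toEuclideanLin (gammaHat τ μs jdx p) x) (Sum.inr k)
        = x k := fun k => by
      simp [Matrix.toLpLin_apply, gammaHat, Matrix.mulVec, dotProduct]
    simp only [hl, hr']
    rw [← EuclideanSpace.norm_sq_eq x, add_mul, one_mul]
    gcongr
    calc ∑ k, ‖moment τ (μs k) p * x (jdx k)‖ ^ 2
        ≤ ∑ _k : Fin r, Real.exp 1 ^ 2 * ‖x‖ ^ 2 := by
          refine Finset.sum_le_sum fun k _ => ?_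
          rw [norm_mul, mul_pow]
          have := moment_bound τ hτ (μs k) (hμs k) ω
          have := hb (jdx k)
          gcongr
      _ = _ := by simp; ring
  calc _ ≤ τ * (Real.sqrt ((r : ℝ) * (Real.exp 1) ^ 2 + 1) * ‖x‖) := by gcongr
    _ = _ := by ring

/-- Theorem 5.5 of the paper: for `ẋ(t) = F(t, C̃x_t)` with `F`
satisfying (L2) (Euclidean Lipschitz constant `Λ`), `C̃` built from measures `μ_k` of total
variation `≤ 1` and coordinates `j_k`, if `e √r √(1 + e⁻²r⁻¹) τ < Λ⁻¹` then for the Lur'e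
form with `ν = τ⁻¹` the transfer matrix satisfies `|Ŵ(-ν + iω)|₂ ≤ √(re² + 1) τ` for all
`ω ∈ ℝ` and `a ≥ 0`; consequently for all sufficiently small `a > 0` the Smith frequency
condition `|Ŵ(-τ⁻¹ + iω)|₂ < (Λ + a)⁻¹` holds for all `ω`, and the characteristic equation
`(a - p)ⁿ = 0` has exactly `n` roots (`p = a`, with multiplicity `n`), all with
`Re p > -τ⁻¹`, and none on the line `Re p = -τ⁻¹`. -/
theorem statement17 (τ : ℝ) (hτ : 0 < τ) (n r : ℕ) (hn : 0 < n) (hr : 0 < r)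
    (μs : Fin r → (C(Set.Icc (-τ) (0:ℝ), ℝ) →L[ℝ] ℝ))
    (hμs : ∀ k, ‖μs k‖ ≤ 1)
    (jdx : Fin r → Fin n) (hjdx : Monotone jdx)
    (F : ℝ → EuclideanSpace ℝ (Fin r) → EuclideanSpace ℝ (Fin n))
    (hFcont : Continuous fun q : ℝ × EuclideanSpace ℝ (Fin r) => F q.1 q.2)
    (Λ : ℝ) (hΛ : 0 < Λ)
    (hFlip : ∀ (t : ℝ) (σ₁ σ₂ : EuclideanSpace ℝ (Fin r)),
      ‖F t σ₁ - F t σ₂‖ ≤ Λ * ‖σ₁ - σ₂‖)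
    (hsmall : Real.exp 1 * Real.sqrt r *
        Real.sqrt (1 + ((Real.exp 1) ^ 2)⁻¹ * (r : ℝ)⁻¹) * τ < Λ⁻¹) :
    (∀ a : ℝ, 0 ≤ a → ∀ ω : ℝ,
      specNorm (What τ μs jdx a ω) ≤ Real.sqrt ((r : ℝ) * (Real.exp 1) ^ 2 + 1) * τ) ∧
    ∃ a₀ > (0:ℝ), ∀ a : ℝ, 0 < a → a ≤ a₀ →
      (∀ ω : ℝ, specNorm (What τ μs jdx a ω) < (Λ + a)⁻¹) ∧
      (-τ⁻¹ < a) ∧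
      (∀ p : ℂ, ((a : ℂ) - p) ^ n = 0 → p = (a : ℂ)) ∧
      (∀ ω : ℝ, ((a : ℂ) - (((-τ⁻¹ : ℝ) : ℂ) + ω * Complex.I)) ^ n ≠ 0) := by
  refine ⟨fun a ha ω => spec_bound τ hτ μs hμs jdx a ha ω, ?_⟩
  have hr0 : (0:ℝ) < r := by exact_mod_cast hr
  have hS : Real.exp 1 * Real.sqrt r * Real.sqrt (1 + ((Real.exp 1) ^ 2)⁻¹ * (r : ℝ)⁻¹)
      = Real.sqrt ((r : ℝ) * (Real.exp 1) ^ 2 + 1) := by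
    have h1 : Real.exp 1 = Real.sqrt (Real.exp 1 ^ 2) :=
      (Real.sqrt_sq (Real.exp_pos 1).le).symm
    conv_lhs => rw [mul_assoc]; lhs; rw [h1]
    rw [← Real.sqrt_mul (by positivity), ← Real.sqrt_mul (by positivity)]
    congr 1
    have := Real.exp_pos 1
    field_simp
  rw [hS] at hsmall
  set S := Real.sqrt ((r : ℝ) * (Real.exp 1) ^ 2 + 1) * τ with hSdef
  have hSpos : 0 < S := by positivity
  have hlt : Λ < S⁻¹ := (lt_inv_comm₀ hSpos hΛ).1 hsmall
  refine ⟨(S⁻¹ - Λ) / 2, by linarith, fun a ha ha0 => ⟨fun ω => ?_, ?_, ?_, ?_⟩⟩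
  · refine (spec_bound τ hτ μs hμs jdx a ha.le ω).trans_lt ?_
    exact (lt_inv_comm₀ (by linarith) hSpos).1 (by linarith)
  · have := inv_pos.2 hτ
    linarith
  · intro p h
    exact (sub_eq_zero.1 (eq_zero_of_pow_eq_zero h)).symm
  · intro ω h
    have h1 := congrArg Complex.re (eq_zero_of_pow_eq_zero h)
    have := inv_pos.2 hτ
    simp at h1
    linarith

end DelaySmallDelays
end
end

section
/- Let F satisfy (L1) (with W ≡ 0) or (L2). Then for every T > 0 there exists a constant C_T > 0 such that for all t ∈ [τ, τ+T] and all q ∈ ℝ: in the case of (L1), ‖ψ^t(q, v₀)‖_𝔼 ≤ C_T · |v₀|_ℍ for all v₀ ∈ 𝔼; in the case of (L2), ‖ψ^t(q, v₁) − ψ^t(q, v₂)‖_𝔼 ≤ C_T · |v₁ − v₂|_ℍ for all v₁, v₂ ∈ 𝔼. -/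
open MeasureTheory Filter Topology Matrix

noncomputable section

namespace DelaySmoothing

variable {n : ℕ}

/-- The history segment `x_t ∈ C([-τ, 0]; ℝⁿ)` of a continuous `x : ℝ → ℝⁿ`. -/
def seg (τ : ℝ) (x : ℝ → (Fin n → ℝ)) (hx : Continuous x) (t : ℝ) :
    C(Set.Icc (-τ) (0:ℝ), Fin n → ℝ) :=
  ⟨fun θ => x (t + θ), hx.comp (continuous_const.add continuous_subtype_val)⟩

/-- The measure of `L²(-τ, 0; ℝⁿ)`. -/
def μτ (τ : ℝ) : Measure ℝ := volume.restrict (Set.Ioo (-τ) 0)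

/-- The delay phase Hilbert space `ℍ = ℝⁿ × L²(-τ, 0; ℝⁿ)`. -/
abbrev HSp (τ : ℝ) (n : ℕ) := (Fin n → ℝ) × Lp (Fin n → ℝ) 2 (μτ τ)

/-- The space `𝔼 = C([-τ, 0]; ℝⁿ)`. -/
abbrev EE (τ : ℝ) (n : ℕ) := C(Set.Icc (-τ) (0:ℝ), Fin n → ℝ)

lemma continuous_seg (τ : ℝ) (x : ℝ → (Fin n → ℝ)) (hx : Continuous x) :
    Continuous (fun t => seg τ x hx t) := by
  apply ContinuousMap.continuous_of_continuous_uncurry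
  show Continuous (fun p : ℝ × Set.Icc (-τ) (0:ℝ) => x (p.1 + p.2))
  fun_prop

/-- Scalar case of the integral estimate for functionals of history segments. -/
lemma integral_abs_functional_le (τ : ℝ) (hτ : 0 < τ) (l : EE τ n →L[ℝ] ℝ)
    (y : ℝ → (Fin n → ℝ)) (hy : Continuous y) (q t : ℝ) (hqt : q ≤ t) :
    ∫ s in q..t, |l (seg τ y hy s)| ≤ ‖l‖ * ∫ u in (q - τ)..t, ‖y u‖ := by
  have hseg := continuous_seg τ y hy
  set g : ℝ → ℝ := fun s => if 0 ≤ l (seg τ y hy s) then 1 else -1 with hg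
  have hgm : Measurable g := by
    refine Measurable.ite ?_ measurable_const measurable_const
    exact measurableSet_le measurable_const (l.continuous.comp hseg).measurable
  have hgb : ∀ s, ‖g s‖ ≤ 1 := by
    intro s
    simp only [hg]
    split_ifs <;> simp
  have hgi : IntervalIntegrable (fun s => g s • seg τ y hy s) volume q t := by
    rw [intervalIntegrable_iff_integrableOn_Ioc_of_le hqt]
    have h1 : IntegrableOn (fun s => seg τ y hy s) (Set.Ioc q t) volume :=
      (intervalIntegrable_iff_integrableOn_Ioc_of_le hqt).1 (hseg.intervalIntegrable q t)
    exact Integrable.bdd_smul h1 1 hgm.aestronglyMeasurable (Eventually.of_forall hgb)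
  have hnn : ∀ᵐ u ∂(volume.restrict (Set.Ioc (q - τ) t)), 0 ≤ ‖y u‖ :=
    Eventually.of_forall fun u => norm_nonneg _
  have h2 : ∫ s in q..t, |l (seg τ y hy s)| = l (∫ s in q..t, g s • seg τ y hy s) := by
    rw [← l.intervalIntegral_comp_comm hgi]
    congr 1
    ext s
    simp only [hg, map_smul, smul_eq_mul]
    split_ifs with h
    · rw [abs_of_nonneg h, one_mul]
    · rw [abs_of_neg (not_le.1 h)]; ring
  have hint0 : ∀ a b : ℝ, IntervalIntegrable (fun u => ‖y u‖) volume a b :=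
    fun a b => hy.norm.intervalIntegrable a b
  have h3 : ‖∫ s in q..t, g s • seg τ y hy s‖ ≤ ∫ u in (q - τ)..t, ‖y u‖ := by
    · rw [ContinuousMap.norm_le _ (intervalIntegral.integral_nonneg (by linarith)
        fun u _ => norm_nonneg _)]
      intro θ
      have h4 : (∫ s in q..t, g s • seg τ y hy s) θ
          = ∫ s in q..t, g s • y (s + θ) := by
        have := (ContinuousMap.evalCLM (M := Fin n → ℝ) ℝ θ).intervalIntegral_comp_comm hgi
        exact this.symm
      rw [h4]
      calc ‖∫ s in q..t, g s • y (s + θ)‖ ≤ ∫ s in q..t, ‖y (s + θ)‖ := by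
            apply intervalIntegral.norm_integral_le_of_norm_le hqt
            · refine Eventually.of_forall fun s _ => ?_
              rw [norm_smul]
              exact mul_le_of_le_one_left (norm_nonneg _) (hgb s)
            · exact Continuous.intervalIntegrable (by fun_prop) _ _
        _ = ∫ u in (q + θ)..(t + θ), ‖y u‖ :=
            intervalIntegral.integral_comp_add_right (fun u => ‖y u‖) (θ : ℝ)
        _ ≤ _ := by
            have h5 := θ.2.1
            have h6 := θ.2.2
            exact intervalIntegral.integral_mono_interval (by linarith) (by linarith)
              (by linarith) hnn (hint0 _ _)
  rw [h2]
  calc l (∫ s in q..t, g s • seg τ y hy s) ≤ ‖l (∫ s in q..t, g s • seg τ y hy s)‖ :=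
        Real.le_norm_self _
    _ ≤ ‖l‖ * ‖∫ s in q..t, g s • seg τ y hy s‖ := l.le_opNorm _
    _ ≤ _ := by gcongr

/-- Vector-valued version. -/
lemma integral_norm_operator_le (τ : ℝ) (hτ : 0 < τ) {d : ℕ} (L : EE τ n →L[ℝ] (Fin d → ℝ))
    (y : ℝ → (Fin n → ℝ)) (hy : Continuous y) (q t : ℝ) (hqt : q ≤ t) :
    ∫ s in q..t, ‖L (seg τ y hy s)‖ ≤ (d * ‖L‖) * ∫ u in (q - τ)..t, ‖y u‖ := by
  have hseg := continuous_seg τ y hy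
  have hL : Continuous fun s => L (seg τ y hy s) := L.continuous.comp hseg
  let l : Fin d → (EE τ n →L[ℝ] ℝ) := fun i => (ContinuousLinearMap.proj i).comp L
  have hl : ∀ i, ‖l i‖ ≤ ‖L‖ := by
    intro i
    refine ContinuousLinearMap.opNorm_le_bound _ (norm_nonneg L) fun φ => ?_
    exact (norm_le_pi_norm (L φ) i).trans (L.le_opNorm φ)
  have hI : 0 ≤ ∫ u in (q - τ)..t, ‖y u‖ :=
    intervalIntegral.integral_nonneg (by linarith) fun u _ => norm_nonneg _
  have hli : ∀ i, Continuous fun s => |l i (seg τ y hy s)| :=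
    fun i => ((l i).continuous.comp hseg).abs
  calc ∫ s in q..t, ‖L (seg τ y hy s)‖
      ≤ ∫ s in q..t, ∑ i, |l i (seg τ y hy s)| := by
        refine intervalIntegral.integral_mono_on hqt (hL.norm.intervalIntegrable _ _)
          ((continuous_finsetSum _ fun i _ => hli i).intervalIntegrable _ _) fun s _ => ?_
        rw [pi_norm_le_iff_of_nonneg (Finset.sum_nonneg fun i _ => abs_nonneg _)]
        intro i
        exact Finset.single_le_sum (f := fun i => |l i (seg τ y hy s)|)
          (fun i _ => abs_nonneg _) (Finset.mem_univ i)
    _ = ∑ i, ∫ s in q..t, |l i (seg τ y hy s)| :=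
        intervalIntegral.integral_finsetSum fun i _ => (hli i).intervalIntegrable _ _
    _ ≤ ∑ _i : Fin d, ‖L‖ * ∫ u in (q - τ)..t, ‖y u‖ := by
        refine Finset.sum_le_sum fun i _ => ?_
        refine (integral_abs_functional_le τ hτ (l i) y hy q t hqt).trans ?_
        exact mul_le_mul_of_nonneg_right (hl i) hI
    _ = _ := by simp [mul_assoc]

/-- The Gronwall estimate. -/
lemma gronwall_seg (τ : ℝ) (hτ : 0 < τ) {r : ℕ} (A : EE τ n →L[ℝ] (Fin n → ℝ))
    (Cop : EE τ n →L[ℝ] (Fin r → ℝ)) (K : ℝ) (hK : 0 ≤ K)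
    (y D : ℝ → (Fin n → ℝ)) (hy : Continuous y) (hD : Continuous D) (q : ℝ)
    (hder : ∀ t, q ≤ t → HasDerivWithinAt y (D t) (Set.Ici q) t)
    (hbd : ∀ t, ‖D t‖ ≤ ‖A (seg τ y hy t)‖ + K * ‖Cop (seg τ y hy t)‖)
    (t : ℝ) (ht : q ≤ t) :
    ‖y t‖ ≤ (‖y q‖ + (n * ‖A‖ + K * (r * ‖Cop‖)) * ∫ u in (q - τ)..q, ‖y u‖)
      * Real.exp ((n * ‖A‖ + K * (r * ‖Cop‖)) * (t - q)) := by
  have hseg := continuous_seg τ y hy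
  set M : ℝ := n * ‖A‖ + K * (r * ‖Cop‖) with hM
  have hM0 : 0 ≤ M := by positivity
  have hint0 : ∀ a b : ℝ, IntervalIntegrable (fun u => ‖y u‖) volume a b :=
    fun a b => hy.norm.intervalIntegrable a b
  set a : ℝ := ‖y q‖ + M * ∫ u in (q - τ)..q, ‖y u‖ with ha
  have hI0 : 0 ≤ ∫ u in (q - τ)..q, ‖y u‖ :=
    intervalIntegral.integral_nonneg (by linarith) fun u _ => norm_nonneg _
  have ha0 : 0 ≤ a := by positivity
  have hcA : Continuous fun s => ‖A (seg τ y hy s)‖ := (A.continuous.comp hseg).norm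
  have hcC : Continuous fun s => K * ‖Cop (seg τ y hy s)‖ :=
    continuous_const.mul (Cop.continuous.comp hseg).norm
  -- integral inequality
  have key : ∀ t, q ≤ t → ‖y t‖ ≤ a + M * ∫ u in q..t, ‖y u‖ := by
    intro t ht
    have h1 : ∫ s in q..t, D s = y t - y q := by
      apply intervalIntegral.integral_eq_sub_of_hasDeriv_right_of_le ht hy.continuousOn
      · intro s hs
        refine (hder s hs.1.le).mono fun z hz => ?_
        exact (hs.1.trans hz).le
      · exact hD.intervalIntegrable _ _
    have h2 : ‖∫ s in q..t, D s‖ ≤ M * ∫ u in (q - τ)..t, ‖y u‖ := by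
      calc ‖∫ s in q..t, D s‖
          ≤ ∫ s in q..t, (‖A (seg τ y hy s)‖ + K * ‖Cop (seg τ y hy s)‖) := by
            apply intervalIntegral.norm_integral_le_of_norm_le ht
            · exact Eventually.of_forall fun s _ => hbd s
            · exact (hcA.add hcC).intervalIntegrable _ _
        _ = (∫ s in q..t, ‖A (seg τ y hy s)‖) + K * ∫ s in q..t, ‖Cop (seg τ y hy s)‖ := by
            rw [intervalIntegral.integral_add (hcA.intervalIntegrable _ _)
              (hcC.intervalIntegrable _ _), intervalIntegral.integral_const_mul]
        _ ≤ (n * ‖A‖) * (∫ u in (q - τ)..t, ‖y u‖)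
            + K * ((r * ‖Cop‖) * ∫ u in (q - τ)..t, ‖y u‖) := by
            gcongr
            · exact integral_norm_operator_le τ hτ A y hy q t ht
            · exact integral_norm_operator_le τ hτ Cop y hy q t ht
        _ = _ := by rw [hM]; ring
    have h3 := intervalIntegral.integral_add_adjacent_intervals (hint0 (q - τ) q) (hint0 q t)
    have h4 : ‖y t‖ ≤ ‖y q‖ + ‖∫ s in q..t, D s‖ := by
      rw [h1]
      calc ‖y t‖ = ‖y q + (y t - y q)‖ := by congr 1; abel
        _ ≤ _ := norm_add_le _ _
    rw [← h3] at h2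
    rw [ha]
    linarith
  have hnn : ∀ s, q ≤ s → 0 ≤ ∫ u in q..s, ‖y u‖ := fun s hs =>
    intervalIntegral.integral_nonneg hs fun u _ => norm_nonneg _
  have hG' : ∀ s, HasDerivAt (fun s => a + M * ∫ u in q..s, ‖y u‖) (M * ‖y s‖) s := by
    intro s
    have := intervalIntegral.integral_hasDerivAt_right (hint0 q s)
      (hy.norm.stronglyMeasurableAtFilter _ _) hy.norm.continuousAt
    exact (this.const_mul M).const_add a
  have hgr := norm_le_gronwallBound_of_norm_deriv_right_le
    (f := fun s => a + M * ∫ u in q..s, ‖y u‖) (f' := fun s => M * ‖y s‖)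
    (δ := a) (K := M) (ε := 0) (a := q) (b := t)
    (fun s _ => (hG' s).continuousAt.continuousWithinAt)
    (fun s _ => (hG' s).hasDerivWithinAt)
    (by simp [abs_of_nonneg ha0])
    (by
      intro s hs
      have h0 := hnn s hs.1
      have h1 : 0 ≤ a + M * ∫ u in q..s, ‖y u‖ := by positivity
      rw [Real.norm_of_nonneg (by positivity), Real.norm_of_nonneg h1, add_zero]
      exact mul_le_mul_of_nonneg_left (key s hs.1) hM0)
    t ⟨ht, le_rfl⟩
  rw [gronwallBound_ε0] at hgr
  exact ((key t ht).trans (Real.le_norm_self _)).trans hgr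

/-- The `L¹` norm of the initial history is controlled by the `ℍ`-norm. -/
lemma integral_history_le (τ : ℝ) (hτ : 0 < τ) (e : EE τ n →L[ℝ] HSp τ n)
    (he2 : ∀ φ : EE τ n, ∀ᵐ θ ∂(μτ τ), ∀ hθ : θ ∈ Set.Icc (-τ) (0:ℝ),
      ((e φ).2 : ℝ → (Fin n → ℝ)) θ = φ ⟨θ, hθ⟩)
    (y : ℝ → (Fin n → ℝ)) (hy : Continuous y) (q : ℝ) :
    ∫ u in (q - τ)..q, ‖y u‖ ≤ ((μτ τ Set.univ) ^ ((1:ℝ) / 2)).toReal * ‖e (seg τ y hy q)‖ := by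
  set f := (e (seg τ y hy q)).2 with hf
  have h1 : ∫ u in (q - τ)..q, ‖y u‖ = ∫ θ, ‖f θ‖ ∂(μτ τ) := by
    have h := intervalIntegral.integral_comp_add_left (a := -τ) (b := 0) (fun u => ‖y u‖) q
    rw [add_zero, ← sub_eq_add_neg] at h
    rw [← h, intervalIntegral.integral_of_le (by linarith), integral_Ioc_eq_integral_Ioo]
    refine integral_congr_ae ?_
    have hmem : ∀ᵐ θ ∂(volume.restrict (Set.Ioo (-τ) 0)), θ ∈ Set.Ioo (-τ) (0:ℝ) :=
      ae_restrict_mem measurableSet_Ioo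
    filter_upwards [hmem, he2 (seg τ y hy q)] with θ hθ h2
    rw [h2 ⟨hθ.1.le, hθ.2.le⟩]
    rfl
  have hfin : μτ τ Set.univ ≠ ⊤ := by simp [μτ]
  have hmeas : AEStronglyMeasurable f (μτ τ) := Lp.aestronglyMeasurable f
  have h2 : ∫ θ, ‖f θ‖ ∂(μτ τ) ≤ ‖f‖ * ((μτ τ Set.univ) ^ ((1:ℝ) / 2)).toReal := by
    rw [integral_norm_eq_lintegral_enorm hmeas, ← eLpNorm_one_eq_lintegral_enorm, Lp.norm_def,
      ← ENNReal.toReal_mul]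
    refine ENNReal.toReal_mono ?_ ?_
    · exact ENNReal.mul_ne_top (Lp.eLpNorm_ne_top f)
        (ENNReal.rpow_ne_top_of_nonneg (by norm_num) hfin)
    · have := eLpNorm_le_eLpNorm_mul_rpow_measure_univ (p := 1) (q := 2) (by norm_num) hmeas
      norm_num at this ⊢
      exact this
  rw [h1, mul_comm]
  refine h2.trans ?_
  gcongr
  exact norm_snd_le _

/-- Lemma 5.7 of the paper, the smoothing estimate: let `F` satisfy
(L1) (with `W ≡ 0`) or (L2).  Then for every `T > 0` there is `C_T > 0` such that for all
`t ∈ [τ, τ + T]` and `q ∈ ℝ`: in the case of (L1) (`W ≡ 0`),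
`‖ψ^t(q, v₀)‖_𝔼 ≤ C_T |v₀|_ℍ`; in the case of (L2),
`‖ψ^t(q, v₁) - ψ^t(q, v₂)‖_𝔼 ≤ C_T |v₁ - v₂|_ℍ`. -/
theorem statement18 (τ : ℝ) (hτ : 0 < τ) (n m r : ℕ)
    (Atil : EE τ n →L[ℝ] (Fin n → ℝ))
    (Cop : EE τ n →L[ℝ] (Fin r → ℝ))
    (Btil : Matrix (Fin n) (Fin m) ℝ)
    (Wf : ℝ → (Fin n → ℝ)) (hWcont : Continuous Wf) (hWbdd : ∃ c, ∀ t, ‖Wf t‖ ≤ c)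
    (F : ℝ → (Fin r → ℝ) → (Fin m → ℝ))
    (hFcont : Continuous fun p : ℝ × (Fin r → ℝ) => F p.1 p.2)
    (Λ : ℝ) (hΛ : 0 < Λ)
    (hcase : ((∀ (t : ℝ) (σ : Fin r → ℝ), ‖F t σ‖ ≤ Λ * ‖σ‖) ∧ Wf = 0) ∨
      (∀ (t : ℝ) (σ₁ σ₂ : Fin r → ℝ), ‖F t σ₁ - F t σ₂‖ ≤ Λ * ‖σ₁ - σ₂‖))
    (e : EE τ n →L[ℝ] HSp τ n) (he_inj : Function.Injective e)
    (he1 : ∀ φ : EE τ n, (e φ).1 = φ ⟨0, Set.right_mem_Icc.mpr (by linarith)⟩)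
    (he2 : ∀ φ : EE τ n, ∀ᵐ θ ∂(μτ τ), ∀ hθ : θ ∈ Set.Icc (-τ) (0:ℝ),
      ((e φ).2 : ℝ → (Fin n → ℝ)) θ = φ ⟨θ, hθ⟩)
    (Psi : ℝ → ℝ → EE τ n → EE τ n)
    (hPsi : ∀ (q : ℝ) (v₀ : EE τ n), ∃ (x : ℝ → (Fin n → ℝ)) (hx : Continuous x),
      seg τ x hx q = v₀ ∧
      (∀ t : ℝ, q ≤ t → HasDerivWithinAt x
        (Atil (seg τ x hx t) + Btil.mulVec (F t (Cop (seg τ x hx t))) + Wf t)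
        (Set.Ici q) t) ∧
      ∀ t : ℝ, 0 ≤ t → Psi t q v₀ = seg τ x hx (t + q)) :
    ∀ T > (0:ℝ), ∃ C > (0:ℝ), ∀ t : ℝ, τ ≤ t → t ≤ τ + T → ∀ q : ℝ,
      (((∀ (s : ℝ) (σ : Fin r → ℝ), ‖F s σ‖ ≤ Λ * ‖σ‖) ∧ Wf = 0) →
        ∀ v₀ : EE τ n, ‖Psi t q v₀‖ ≤ C * ‖e v₀‖) ∧
      ((∀ (s : ℝ) (σ₁ σ₂ : Fin r → ℝ), ‖F s σ₁ - F s σ₂‖ ≤ Λ * ‖σ₁ - σ₂‖) →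
        ∀ v₁ v₂ : EE τ n, ‖Psi t q v₁ - Psi t q v₂‖ ≤ C * ‖e v₁ - e v₂‖) := by
  intro T hT
  let Bl : (Fin m → ℝ) →L[ℝ] (Fin n → ℝ) := Btil.mulVecLin.toContinuousLinearMap
  have hBl : ∀ v, Btil.mulVec v = Bl v := fun v => rfl
  set K : ℝ := ‖Bl‖ * Λ with hKdef
  have hK : 0 ≤ K := by positivity
  set M : ℝ := n * ‖Atil‖ + K * (r * ‖Cop‖) with hM
  have hM0 : 0 ≤ M := by positivity
  set c : ℝ := ((μτ τ Set.univ) ^ ((1:ℝ) / 2)).toReal with hc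
  have hc0 : 0 ≤ c := ENNReal.toReal_nonneg
  have hEc : 0 < (1 + M * c) * Real.exp (M * (τ + T)) := by positivity
  -- common estimate
  have main : ∀ (q : ℝ) (y D : ℝ → (Fin n → ℝ)) (hy : Continuous y), Continuous D →
      (∀ t, q ≤ t → HasDerivWithinAt y (D t) (Set.Ici q) t) →
      (∀ t, ‖D t‖ ≤ ‖Atil (seg τ y hy t)‖ + K * ‖Cop (seg τ y hy t)‖) →
      ∀ t, τ ≤ t → t ≤ τ + T →
      ‖seg τ y hy (t + q)‖ ≤ ((1 + M * c) * Real.exp (M * (τ + T))) * ‖e (seg τ y hy q)‖ := by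
    intro q y D hy hD hder hbd t ht1 ht2
    rw [ContinuousMap.norm_le _ (by positivity)]
    intro θ
    have h5 := θ.2.1
    have h6 := θ.2.2
    show ‖y (t + q + θ)‖ ≤ _
    have hg := gronwall_seg τ hτ Atil Cop K hK y D hy hD q hder hbd (t + q + θ) (by linarith)
    rw [← hM] at hg
    have h7 := integral_history_le τ hτ e he2 y hy q
    have h8 : ‖y q‖ ≤ ‖e (seg τ y hy q)‖ := by
      have h9 := norm_fst_le (e (seg τ y hy q))
      rw [he1] at h9
      have h10 : (seg τ y hy q) ⟨0, Set.right_mem_Icc.mpr (by linarith)⟩ = y q := by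
        show y (q + 0) = y q
        rw [add_zero]
      rwa [h10] at h9
    refine hg.trans ?_
    calc _ ≤ (‖e (seg τ y hy q)‖ + M * (c * ‖e (seg τ y hy q)‖)) * Real.exp (M * (τ + T)) := by
          gcongr
          linarith
      _ = _ := by ring
  have hRcont : ∀ (x : ℝ → (Fin n → ℝ)) (hx : Continuous x), Continuous fun t =>
      Atil (seg τ x hx t) + Btil.mulVec (F t (Cop (seg τ x hx t))) + Wf t := by
    intro x hx
    have hs := continuous_seg τ x hx
    have h1 : Continuous fun t => F t (Cop (seg τ x hx t)) :=
      hFcont.comp (continuous_id.prodMk (Cop.continuous.comp hs))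
    exact ((Atil.continuous.comp hs).add (Bl.continuous.comp h1)).add hWcont
  refine ⟨_, hEc, fun t ht1 ht2 q => ⟨?_, ?_⟩⟩
  · rintro ⟨hF, hW⟩ v₀
    obtain ⟨x, hx, hx0, hxd, hxP⟩ := hPsi q v₀
    rw [hxP t (by linarith), ← hx0]
    refine main q x _ hx (hRcont x hx) hxd (fun s => ?_) t ht1 ht2
    rw [hW, Pi.zero_apply, add_zero, hBl]
    refine (norm_add_le _ _).trans ?_
    gcongr
    calc _ ≤ ‖Bl‖ * ‖F s (Cop (seg τ x hx s))‖ := Bl.le_opNorm _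
      _ ≤ ‖Bl‖ * (Λ * ‖Cop (seg τ x hx s)‖) := by gcongr; exact hF _ _
      _ = _ := by rw [hKdef]; ring
  · intro hF v₁ v₂
    obtain ⟨x, hx, hx0, hxd, hxP⟩ := hPsi q v₁
    obtain ⟨z, hz, hz0, hzd, hzP⟩ := hPsi q v₂
    have hsub : ∀ s, seg τ (x - z) (hx.sub hz) s = seg τ x hx s - seg τ z hz s :=
      fun s => rfl
    rw [hxP t (by linarith), hzP t (by linarith), ← hx0, ← hz0, ← map_sub, ← hsub, ← hsub]
    refine main q _ _ (hx.sub hz) ((hRcont x hx).sub (hRcont z hz))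
      (fun s hs => (hxd s hs).sub (hzd s hs)) (fun s => ?_) t ht1 ht2
    rw [hsub, map_sub, map_sub, Pi.sub_apply, hBl, hBl]
    have heq : Atil (seg τ x hx s) + Bl (F s (Cop (seg τ x hx s))) + Wf s
        - (Atil (seg τ z hz s) + Bl (F s (Cop (seg τ z hz s))) + Wf s)
        = (Atil (seg τ x hx s) - Atil (seg τ z hz s))
          + Bl (F s (Cop (seg τ x hx s)) - F s (Cop (seg τ z hz s))) := by
      rw [map_sub]; abel
    rw [heq]
    refine (norm_add_le _ _).trans ?_
    gcongr
    calc _ ≤ ‖Bl‖ * ‖F s (Cop (seg τ x hx s)) - F s (Cop (seg τ z hz s))‖ := Bl.le_opNorm _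
      _ ≤ ‖Bl‖ * (Λ * ‖Cop (seg τ x hx s) - Cop (seg τ z hz s)‖) := by gcongr; exact hF _ _ _
      _ = _ := by rw [hKdef]; ring


end DelaySmoothing
end
end
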